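/- For every integer r ≥ 1, the number of edges of the infinite hexagonal grid with exactly one endpoint in V(G_r) satisfies |ℰ(V(G_r))| = 6r. -/

import Mathlib

/-- Adjacency of the infinite hexagonal grid `G∞` in brick-wall coordinates on `ℤ × ℤ`:
`(x,y)` and `(x',y')` are adjacent iff `y' = y` and `|x' - x| = 1`, or
`x' = x` and `|y' - y| = 1` and `x + min y y'` is even. -/
def hexAdj (v w : ℤ × ℤ) : Prop :=
  (v.2 = w.2 ∧ (v.1 - w.1).natAbs = 1) ∨
  (v.1 = w.1 ∧ (v.2 - w.2).natAbs = 1 ∧ Even (v.1 + min v.2 w.2))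

/-- The neighborhood `𝒩(W)`: vertices not in `W` adjacent to some vertex of `W`. -/
def hexNbhd (W : Set (ℤ × ℤ)) : Set (ℤ × ℤ) :=
  {v | v ∉ W ∧ ∃ w ∈ W, hexAdj v w}

/-- The boundary `ℬ(W)`: vertices of `W` adjacent to some vertex not in `W`. -/
def hexBdry (W : Set (ℤ × ℤ)) : Set (ℤ × ℤ) :=
  {v | v ∈ W ∧ ∃ w, w ∉ W ∧ hexAdj v w}

/-- The outgoing edges `ℰ(W)`, encoded as ordered pairs `(v, w)` with `v ∈ W`, `w ∉ W`
and `v` adjacent to `w`; each edge with exactly one endpoint in `W` corresponds to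
exactly one such pair. -/
def hexCutEdges (W : Set (ℤ × ℤ)) : Set ((ℤ × ℤ) × (ℤ × ℤ)) :=
  {p | p.1 ∈ W ∧ p.2 ∉ W ∧ hexAdj p.1 p.2}

/-- The hexagonal cell `C(a,b)`, with vertex set `{(2a+b+i, b+j) : i ∈ {0,1,2}, j ∈ {0,1}}`. -/
def hexCell (a b : ℤ) : Set (ℤ × ℤ) :=
  {(2*a+b, b), (2*a+b+1, b), (2*a+b+2, b),
   (2*a+b, b+1), (2*a+b+1, b+1), (2*a+b+2, b+1)}

/-- The vertex set `V(G_r)` of the finite hexagonal grid of radius `r`: the union of the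
cells `C(a,b)` with `(|a| + |b| + |a+b|)/2 ≤ r - 1`. -/
def gridVerts (r : ℕ) : Set (ℤ × ℤ) :=
  {v | ∃ a b : ℤ, a.natAbs + b.natAbs + (a+b).natAbs ≤ 2*(r-1) ∧ v ∈ hexCell a b}

/-- `𝒩_{G_r}(W)`: vertices of `V(G_r) \ W` adjacent to some vertex of `W`. -/
def hexNbhdIn (r : ℕ) (W : Set (ℤ × ℤ)) : Set (ℤ × ℤ) :=
  {v | v ∈ gridVerts r ∧ v ∉ W ∧ ∃ w ∈ W, hexAdj v w}

/-- `ℬ_{G_r}(W)`: vertices of `W` adjacent to some vertex of `V(G_r) \ W`. -/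
def hexBdryIn (r : ℕ) (W : Set (ℤ × ℤ)) : Set (ℤ × ℤ) :=
  {v | v ∈ W ∧ ∃ w, w ∈ gridVerts r ∧ w ∉ W ∧ hexAdj v w}

/-- `ℰ_{G_r}(W)`: the edges of `G_r` with exactly one endpoint in `W ⊆ V(G_r)`, encoded
as ordered pairs `(v, w)` with `v ∈ W`, `w ∈ V(G_r) \ W`, `v` adjacent to `w`. -/
def hexCutEdgesIn (r : ℕ) (W : Set (ℤ × ℤ)) : Set ((ℤ × ℤ) × (ℤ × ℤ)) :=
  {p | p.1 ∈ W ∧ p.2 ∈ gridVerts r ∧ p.2 ∉ W ∧ hexAdj p.1 p.2}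

/-- The index `ind_i(x,y)` of the direction-`i` row containing `(x,y)`
(directions numbered `0, 1, 2` for the paper's `1, 2, 3`):
`ind_1 = y`, `ind_2 = ⌊(y-x)/2⌋`, `ind_3 = ⌊(x+y)/2⌋`. -/
def rowInd : Fin 3 → ℤ × ℤ → ℤ
  | 0, v => v.2
  | 1, v => Int.fdiv (v.2 - v.1) 2
  | 2, v => Int.fdiv (v.1 + v.2) 2

/-- The linear parameter `p_i` along direction-`i` rows:
`p_1 = x`, `p_2 = x + y`, `p_3 = x - y`. -/
def rowParam : Fin 3 → ℤ × ℤ → ℤ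
  | 0, v => v.1
  | 1, v => v.1 + v.2
  | 2, v => v.1 - v.2

/-- A set of integers is consecutive if it contains every integer between any two of
its elements. -/
def ConsecutiveSet (S : Set ℤ) : Prop :=
  ∀ a ∈ S, ∀ b ∈ S, ∀ k : ℤ, a ≤ k → k ≤ b → k ∈ S

/-- `v` is an outermost neighbor of `W` for direction `i`: the direction-`i` row of `v`
is gray, and the parameter of `v` is `m - 1` or `M + 1`, where `m` and `M` are the
minimum and maximum of the parameter over `W` intersected with that row. -/
def IsOutermostNeighbor (W : Set (ℤ × ℤ)) (i : Fin 3) (v : ℤ × ℤ) : Prop :=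
  (rowParam i v + 1 ∈ rowParam i '' {w ∈ W | rowInd i w = rowInd i v} ∧
    ∀ q ∈ rowParam i '' {w ∈ W | rowInd i w = rowInd i v}, rowParam i v + 1 ≤ q) ∨
  (rowParam i v - 1 ∈ rowParam i '' {w ∈ W | rowInd i w = rowInd i v} ∧
    ∀ q ∈ rowParam i '' {w ∈ W | rowInd i w = rowInd i v}, q ≤ rowParam i v - 1)

/-- Description of `V(G_r)` by linear inequalities. -/
lemma mem_gridVerts_iff {r : ℕ} (hr : 1 ≤ r) (x y : ℤ) :
    (x, y) ∈ gridVerts r ↔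
      1 - r ≤ y ∧ y ≤ r ∧ y + 1 - 2 * r ≤ x ∧ 2 - y - 2 * r ≤ x ∧
        x ≤ 2 * r + 1 - y ∧ x ≤ 2 * r + y := by
  simp only [gridVerts, hexCell, Set.mem_ofPred_eq, Set.mem_insert_iff, Set.mem_singleton_iff,
    Prod.mk.injEq]
  constructor
  · rintro ⟨a, b, hab, h⟩
    omega
  · intro h
    obtain ⟨b, hb⟩ : ∃ b : ℤ, (y ≤ 0 ∧ b = y) ∨ (1 ≤ y ∧ b = y - 1) := by
      rcases le_or_gt y 0 with hy | hy
      exacts [⟨y, Or.inl ⟨hy, rfl⟩⟩, ⟨y - 1, Or.inr ⟨hy, rfl⟩⟩]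
    rcases le_or_gt x 0 with hx | hx
    · exact ⟨(x - b) / 2, b, by omega, by omega⟩
    · exact ⟨(x - b - 1) / 2, b, by omega, by omega⟩

/-- Parametrization of the outgoing edges of `V(G_r)`: for each of the six sides of `G_r`,
the edges are indexed by `k < r`. -/
def sideEdge (r : ℕ) : Fin 6 × Fin r → (ℤ × ℤ) × (ℤ × ℤ)
  | (0, k) => ((2 * r - k, k + 1), (2 * r - k + 1, k + 1))
  | (1, k) => ((2 * r - k, -k), (2 * r - k + 1, -k))
  | (2, k) => ((2 + k - 2 * r, k + 1), (1 + k - 2 * r, k + 1))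
  | (3, k) => ((2 + k - 2 * r, -k), (1 + k - 2 * r, -k))
  | (4, k) => ((2 + 2 * k - r, r), (2 + 2 * k - r, r + 1))
  | (5, k) => ((2 + 2 * k - r, 1 - r), (2 + 2 * k - r, -r))

lemma sideEdge_injective (r : ℕ) : Function.Injective (sideEdge r) := by
  rintro ⟨i, k, hk⟩ ⟨j, l, hl⟩ h
  fin_cases i <;> fin_cases j <;>
    simp only [sideEdge, Prod.mk.injEq, Fin.mk.injEq, Fin.zero_eta, Fin.mk_one, Fin.reduceFinMk,
      Fin.reduceEq, true_and, false_and] at h ⊢ <;> omega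

lemma hexCutEdges_gridVerts {r : ℕ} (hr : 1 ≤ r) :
    hexCutEdges (gridVerts r) = Set.range (sideEdge r) := by
  ext ⟨⟨x, y⟩, ⟨z, w⟩⟩
  simp only [hexCutEdges, Set.mem_ofPred_eq, mem_gridVerts_iff hr, hexAdj, Int.even_iff,
    Set.mem_range]
  constructor
  · rintro ⟨hv, hw, ⟨hy, hx⟩ | ⟨hx, hy, he⟩⟩
    · rcases le_or_gt z x with hzx | hzx <;> rcases le_or_gt y 0 with hy0 | hy0
      · refine ⟨(3, ⟨(-y).toNat, by omega⟩), ?_⟩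
        simp only [sideEdge, Prod.mk.injEq]
        omega
      · refine ⟨(2, ⟨(y - 1).toNat, by omega⟩), ?_⟩
        simp only [sideEdge, Prod.mk.injEq]
        omega
      · refine ⟨(1, ⟨(-y).toNat, by omega⟩), ?_⟩
        simp only [sideEdge, Prod.mk.injEq]
        omega
      · refine ⟨(0, ⟨(y - 1).toNat, by omega⟩), ?_⟩
        simp only [sideEdge, Prod.mk.injEq]
        omega
    · rcases le_or_gt w y with hwy | hwy
      · refine ⟨(5, ⟨((x + r - 2) / 2).toNat, by omega⟩), ?_⟩
        simp only [sideEdge, Prod.mk.injEq]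
        omega
      · refine ⟨(4, ⟨((x + r - 2) / 2).toNat, by omega⟩), ?_⟩
        simp only [sideEdge, Prod.mk.injEq]
        omega
  · rintro ⟨⟨i, k, hk⟩, h⟩
    fin_cases i <;>
      simp only [sideEdge, Prod.mk.injEq] at h <;>
      omega

/-- For every `r ≥ 1`, `|ℰ(V(G_r))| = 6r`. -/
theorem card_cutEdges_gridVerts (r : ℕ) (hr : 1 ≤ r) :
    (hexCutEdges (gridVerts r)).ncard = 6*r := by
  rw [hexCutEdges_gridVerts hr, ← Set.image_univ,
    Set.ncard_image_of_injective _ (sideEdge_injective r), Set.ncard_univ]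
  simp
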